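/- arXiv:1712.03913 — 7 statements merged into one kernel-verified Lean document; each statement's English description precedes it below -/
import Mathlib

section
/- Under Assumption 2.b, every sequential maximization pair (i_s, j_s) is feasible, i.e., ¬T1 i_s, ¬T2 j_s and ¬C i_s j_s. -/
open scoped Classical

noncomputable section

/-- Sequential game payoff of the leader (depends only on his own trajectory). -/
def aSeq {Γ1 : Type*} (κ : ℝ) (T1 : Γ1 → Prop) (p1 : Γ1 → ℝ) (i : Γ1) : ℝ :=
  if T1 i then κ else p1 i

/-- Follower payoff (same in the sequential and the cooperative game). -/
def bPay {Γ1 Γ2 : Type*} (κ lam : ℝ) (T2 : Γ2 → Prop) (C : Γ1 → Γ2 → Prop)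
    (p2 : Γ2 → ℝ) (i : Γ1) (j : Γ2) : ℝ :=
  if T2 j then κ else if C i j then lam else p2 j

/-- Cooperative game payoff of the leader. -/
def aPay {Γ1 Γ2 : Type*} (κ lam : ℝ) (T1 : Γ1 → Prop) (C : Γ1 → Γ2 → Prop)
    (p1 : Γ1 → ℝ) (i : Γ1) (j : Γ2) : ℝ :=
  if T1 i then κ else if C i j then lam else p1 i

/-- Blocking game payoff of the leader. -/
def aBl {Γ1 Γ2 : Type*} (κ lam w : ℝ) (T1 : Γ1 → Prop) (C : Γ1 → Γ2 → Prop)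
    (p1 : Γ1 → ℝ) (p2 : Γ2 → ℝ) (i : Γ1) (j : Γ2) : ℝ :=
  if T1 i then κ else if C i j then lam else if p1 i < p2 j then p1 i else p1 i + w

/-- Blocking game payoff of the follower. -/
def bBl {Γ1 Γ2 : Type*} (κ lam w : ℝ) (T2 : Γ2 → Prop) (C : Γ1 → Γ2 → Prop)
    (p1 : Γ1 → ℝ) (p2 : Γ2 → ℝ) (i : Γ1) (j : Γ2) : ℝ :=
  if T2 j then κ else if C i j then lam else if p1 i ≥ p2 j then p2 j else p2 j + w

/-- A trajectory pair is feasible: stays on track and does not collide. -/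
def Feasible {Γ1 Γ2 : Type*} (T1 : Γ1 → Prop) (T2 : Γ2 → Prop) (C : Γ1 → Γ2 → Prop)
    (i : Γ1) (j : Γ2) : Prop :=
  ¬ T1 i ∧ ¬ T2 j ∧ ¬ C i j

/-- Best-response set of player 2 to strategy `i` of player 1. -/
def BestResponse {Γ1 Γ2 : Type*} (B : Γ1 → Γ2 → ℝ) (i : Γ1) : Set Γ2 :=
  {j | ∀ j', B i j' ≤ B i j}

/-- Stackelberg equilibrium with player 1 as leader. -/
def StackelbergEq {Γ1 Γ2 : Type*} (A B : Γ1 → Γ2 → ℝ) (iStar : Γ1) (jStar : Γ2) : Prop :=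
  (∀ i, sInf (A i '' BestResponse B i) ≤ sInf (A iStar '' BestResponse B iStar)) ∧
  jStar ∈ BestResponse B iStar

/-- Pure-strategy Nash equilibrium. -/
def NashEq {Γ1 Γ2 : Type*} (A B : Γ1 → Γ2 → ℝ) (iStar : Γ1) (jStar : Γ2) : Prop :=
  (∀ i, A i jStar ≤ A iStar jStar) ∧ (∀ j, B iStar j ≤ B iStar jStar)

/-- Sequential maximization pair: the leader maximizes `aSeq`, the follower best responds. -/
def SeqMaxPair {Γ1 Γ2 : Type*} (κ lam : ℝ) (T1 : Γ1 → Prop) (T2 : Γ2 → Prop)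
    (C : Γ1 → Γ2 → Prop) (p1 : Γ1 → ℝ) (p2 : Γ2 → ℝ) (iS : Γ1) (jS : Γ2) : Prop :=
  (∀ i, aSeq κ T1 p1 i ≤ aSeq κ T1 p1 iS) ∧
  (∀ j, bPay κ lam T2 C p2 iS j ≤ bPay κ lam T2 C p2 iS jS)

/-- Assumption 2.a: a feasible trajectory pair exists. -/
def AssumptionA {Γ1 Γ2 : Type*} (T1 : Γ1 → Prop) (T2 : Γ2 → Prop)
    (C : Γ1 → Γ2 → Prop) : Prop :=
  ∃ i j, Feasible T1 T2 C i j

/-- Assumption 2.b. -/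
def AssumptionB {Γ1 Γ2 : Type*} (κ lam : ℝ) (T1 : Γ1 → Prop) (T2 : Γ2 → Prop)
    (C : Γ1 → Γ2 → Prop) (p1 : Γ1 → ℝ) (p2 : Γ2 → ℝ) : Prop :=
  (∃ i, ¬ T1 i) ∧
  ∃ jbar : Γ2, ∀ i' : Γ1, (∀ i, aSeq κ T1 p1 i ≤ aSeq κ T1 p1 i') →
    lam < bPay κ lam T2 C p2 i' jbar

/-- Blocking trajectory pair. -/
def BlockingPair {Γ1 Γ2 : Type*} (T1 : Γ1 → Prop) (T2 : Γ2 → Prop)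
    (C : Γ1 → Γ2 → Prop) (p1 : Γ1 → ℝ) (p2 : Γ2 → ℝ) (i : Γ1) (j : Γ2) : Prop :=
  Feasible T1 T2 C i j ∧ p2 j < p1 i ∧ ∀ jc, p2 j < p2 jc → (T2 jc ∨ C i jc)

section Thresholds

variable {Γ1 Γ2 : Type*} {κ lam c : ℝ} {T1 : Γ1 → Prop} {T2 : Γ2 → Prop} {C : Γ1 → Γ2 → Prop}
  {p1 : Γ1 → ℝ} {p2 : Γ2 → ℝ} {i : Γ1} {j : Γ2}

theorem lt_aSeq_iff (hκ : κ ≤ c) : c < aSeq κ T1 p1 i ↔ ¬ T1 i ∧ c < p1 i := by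
  by_cases hT : T1 i
  · simp [aSeq, hT, hκ]
  · simp [aSeq, hT]

theorem lt_bPay_iff (hκ : κ ≤ c) (hlam : lam ≤ c) :
    c < bPay κ lam T2 C p2 i j ↔ ¬ T2 j ∧ ¬ C i j ∧ c < p2 j := by
  by_cases hT : T2 j
  · simp [bPay, hT, hκ]
  by_cases hC : C i j
  · simp [bPay, hT, hC, hlam]
  · simp [bPay, hT, hC]

end Thresholds

theorem stmt1_general {Γ1 Γ2 : Type*} {κ lam : ℝ} (hκlam : κ ≤ lam)
    {T1 : Γ1 → Prop} {T2 : Γ2 → Prop} {C : Γ1 → Γ2 → Prop} {p1 : Γ1 → ℝ} {p2 : Γ2 → ℝ}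
    (hp1 : ∀ i, ¬ T1 i → κ < p1 i) (hB : AssumptionB κ lam T1 T2 C p1 p2)
    {iS : Γ1} {jS : Γ2} (hseq : SeqMaxPair κ lam T1 T2 C p1 p2 iS jS) :
    Feasible T1 T2 C iS jS := by
  obtain ⟨⟨i, hi⟩, jbar, hjbar⟩ := hB
  obtain ⟨hlead, hfollow⟩ := hseq
  have leader_payoff : κ < aSeq κ T1 p1 iS :=
    ((lt_aSeq_iff le_rfl).2 ⟨hi, hp1 i hi⟩).trans_le (hlead i)
  have follower_payoff : lam < bPay κ lam T2 C p2 iS jS :=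
    (hjbar iS hlead).trans_le (hfollow jbar)
  have leader_on_track : ¬ T1 iS := ((lt_aSeq_iff le_rfl).1 leader_payoff).1
  obtain ⟨follower_on_track, no_collision, -⟩ := (lt_bPay_iff hκlam le_rfl).1 follower_payoff
  exact ⟨leader_on_track, follower_on_track, no_collision⟩

theorem stmt1 {Γ1 Γ2 : Type*} [Fintype Γ1] [Fintype Γ2] [Nonempty Γ1] [Nonempty Γ2]
    (κ lam : ℝ) (hκlam : κ < lam) (hlam0 : lam < 0)
    (T1 : Γ1 → Prop) (T2 : Γ2 → Prop) (C : Γ1 → Γ2 → Prop)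
    (p1 : Γ1 → ℝ) (p2 : Γ2 → ℝ)
    (hp1 : ∀ i, 0 < p1 i) (hp2 : ∀ j, 0 < p2 j)
    (hB : AssumptionB κ lam T1 T2 C p1 p2)
    (iS : Γ1) (jS : Γ2)
    (hseq : SeqMaxPair κ lam T1 T2 C p1 p2 iS jS) :
    Feasible T1 T2 C iS jS :=
  stmt1_general hκlam.le (fun i _ => (hκlam.trans hlam0).trans (hp1 i)) hB hseq

end
end

section
/- Under Assumption 2.a, every Stackelberg equilibrium (i*, j*) of the cooperative game is feasible, i.e., ¬T1 i*, ¬T2 j* and ¬C i* j*. -/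
open scoped Classical

noncomputable section

/-!
If `(i, j)` is feasible, the follower can secure more than the collision penalty against `i`, hence
every best response to `i` is feasible too and the leader secures `p1 i` by playing `i`. An
equilibrium payoff of the leader is at least this secured value, which is larger than both
penalties; so at an equilibrium the leader is on the track and there is no collision. The follower
is on the track as well, since leaving it costs more than any on-track response, even a colliding
one.
-/

section

variable {Γ1 Γ2 : Type*} {κ lam : ℝ} {T1 : Γ1 → Prop} {T2 : Γ2 → Prop} {C : Γ1 → Γ2 → Prop}
  {p1 : Γ1 → ℝ} {p2 : Γ2 → ℝ} {A B : Γ1 → Γ2 → ℝ} {i iStar : Γ1} {j j' jStar : Γ2}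

theorem bestResponse_nonempty [Finite Γ2] [Nonempty Γ2] (B : Γ1 → Γ2 → ℝ) (i : Γ1) :
    (BestResponse B i).Nonempty :=
  Finite.exists_max (B i)

theorem StackelbergEq.le_of_forall_bestResponse_le {c : ℝ} (h : StackelbergEq A B iStar jStar)
    (hbdd : BddBelow (A iStar '' BestResponse B iStar)) (hne : (BestResponse B i).Nonempty)
    (hc : ∀ j ∈ BestResponse B i, c ≤ A i j) : c ≤ A iStar jStar :=
  calc
    c ≤ sInf (A i '' BestResponse B i) := le_csInf (hne.image _) (Set.forall_mem_image.2 hc)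
    _ ≤ sInf (A iStar '' BestResponse B iStar) := h.1 i
    _ ≤ A iStar jStar := csInf_le hbdd (Set.mem_image_of_mem _ h.2)

theorem aPay_of_offTrack (hT : T1 i) : aPay κ lam T1 C p1 i j = κ :=
  if_pos hT

theorem aPay_of_collision (hT : ¬ T1 i) (hC : C i j) : aPay κ lam T1 C p1 i j = lam :=
  (if_neg hT).trans (if_pos hC)

theorem aPay_of_not_collision (hT : ¬ T1 i) (hC : ¬ C i j) : aPay κ lam T1 C p1 i j = p1 i :=
  (if_neg hT).trans (if_neg hC)

/- So the `sInf` in `StackelbergEq` is a true minimum whenever a best response exists, even for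
infinite trajectory sets; over an empty best-response set it is the junk value `0`. -/
theorem finite_range_aPay : (Set.range (aPay κ lam T1 C p1 i)).Finite := by
  refine (Set.toFinite {κ, lam, p1 i}).subset (Set.range_subset_iff.2 fun j => ?_)
  unfold aPay
  split_ifs <;> simp

theorem offTrackPenalty_lt_aPay (hκlam : κ < lam) (hp : κ < p1 i) (hT : ¬ T1 i) :
    κ < aPay κ lam T1 C p1 i j := by
  by_cases hC : C i j
  · rwa [aPay_of_collision hT hC]
  · rwa [aPay_of_not_collision hT hC]

theorem not_offTrack_and_not_collision_of_lt_aPay (hκlam : κ < lam)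
    (h : lam < aPay κ lam T1 C p1 i j) : ¬ T1 i ∧ ¬ C i j := by
  have hT : ¬ T1 i := fun hT => (h.trans_eq (aPay_of_offTrack hT)).not_gt hκlam
  exact ⟨hT, fun hC => (h.trans_eq (aPay_of_collision hT hC)).false⟩

theorem bPay_eq_aPay_swap :
    bPay κ lam T2 C p2 i j = aPay κ lam T2 (Function.swap C) p2 j i :=
  rfl

theorem not_offTrack_of_mem_bestResponse (hκlam : κ < lam) (hp : κ < p2 j) (hT : ¬ T2 j)
    (hj' : j' ∈ BestResponse (bPay κ lam T2 C p2) i) : ¬ T2 j' := by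
  intro hT'
  have hle : bPay κ lam T2 C p2 i j ≤ bPay κ lam T2 C p2 i j' := hj' j
  rw [bPay_eq_aPay_swap, bPay_eq_aPay_swap, aPay_of_offTrack hT'] at hle
  exact hle.not_gt (offTrackPenalty_lt_aPay hκlam hp hT)

theorem Feasible.of_mem_bestResponse (hf : Feasible T1 T2 C i j) (hκlam : κ < lam)
    (hp : lam < p2 j) (hj' : j' ∈ BestResponse (bPay κ lam T2 C p2) i) :
    Feasible T1 T2 C i j' := by
  obtain ⟨hT1, hT2, hC⟩ := hf
  have hlt : lam < bPay κ lam T2 C p2 i j' :=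
    calc
      lam < p2 j := hp
      _ = bPay κ lam T2 C p2 i j := by rw [bPay_eq_aPay_swap, aPay_of_not_collision hT2 hC]
      _ ≤ bPay κ lam T2 C p2 i j' := hj' j
  rw [bPay_eq_aPay_swap] at hlt
  exact ⟨hT1, not_offTrack_and_not_collision_of_lt_aPay hκlam hlt⟩

theorem stmt3_general (hκlam : κ < lam) (hf : Feasible T1 T2 C i j) (hp1 : lam < p1 i)
    (hp2 : lam < p2 j) (hne : (BestResponse (bPay κ lam T2 C p2) i).Nonempty)
    (hst : StackelbergEq (aPay κ lam T1 C p1) (bPay κ lam T2 C p2) iStar jStar) :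
    Feasible T1 T2 C iStar jStar := by
  have hsecured : ∀ j' ∈ BestResponse (bPay κ lam T2 C p2) i,
      p1 i ≤ aPay κ lam T1 C p1 i j' := fun j' hj' =>
    have hf' := hf.of_mem_bestResponse hκlam hp2 hj'
    (aPay_of_not_collision hf'.1 hf'.2.2).ge
  have hbdd : BddBelow (aPay κ lam T1 C p1 iStar '' BestResponse (bPay κ lam T2 C p2) iStar) :=
    finite_range_aPay.bddBelow.mono (Set.image_subset_range _ _)
  have hleader : p1 i ≤ aPay κ lam T1 C p1 iStar jStar :=
    hst.le_of_forall_bestResponse_le hbdd hne hsecured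
  obtain ⟨hT1, hC⟩ := not_offTrack_and_not_collision_of_lt_aPay hκlam (hp1.trans_le hleader)
  exact ⟨hT1, not_offTrack_of_mem_bestResponse hκlam (hκlam.trans hp2) hf.2.1 hst.2, hC⟩

end

theorem stmt3 {Γ1 Γ2 : Type*} [Fintype Γ1] [Fintype Γ2] [Nonempty Γ1] [Nonempty Γ2]
    (κ lam : ℝ) (hκlam : κ < lam) (hlam0 : lam < 0)
    (T1 : Γ1 → Prop) (T2 : Γ2 → Prop) (C : Γ1 → Γ2 → Prop)
    (p1 : Γ1 → ℝ) (p2 : Γ2 → ℝ)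
    (hp1 : ∀ i, 0 < p1 i) (hp2 : ∀ j, 0 < p2 j)
    (hA : AssumptionA T1 T2 C)
    (iStar : Γ1) (jStar : Γ2)
    (hst : StackelbergEq (aPay κ lam T1 C p1) (bPay κ lam T2 C p2) iStar jStar) :
    Feasible T1 T2 C iStar jStar := by
  obtain ⟨i, j, hf⟩ := hA
  exact stmt3_general hκlam hf (hlam0.trans (hp1 i)) (hlam0.trans (hp2 j))
    (bestResponse_nonempty _ i) hst

end
end

section
/- Under Assumption 2.a, the cooperative game possesses at least one feasible pure-strategy Nash equilibrium. -/
open scoped Classical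

noncomputable section

/-!
Leaving the track or colliding never pays more than a feasible outcome, so the only deviations from
a feasible pair that could be profitable lead to another feasible pair. There the deviating player
gains while the opponent's progress is unchanged, which is impossible at a feasible pair that is
maximal for the product order on the progress payoffs.
-/

section

variable {Γ1 Γ2 : Type*} {κ lam : ℝ} {T1 : Γ1 → Prop} {T2 : Γ2 → Prop}
  {C : Γ1 → Γ2 → Prop} {p1 : Γ1 → ℝ} {p2 : Γ2 → ℝ} {i : Γ1} {j : Γ2}

lemma forall_aPay_le_iff (hi : ¬ T1 i) (hc : ¬ C i j) (hp : max κ lam ≤ p1 i) :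
    (∀ i', aPay κ lam T1 C p1 i' j ≤ aPay κ lam T1 C p1 i j) ↔
      ∀ i', ¬ T1 i' → ¬ C i' j → p1 i' ≤ p1 i := by
  obtain ⟨hκ, hlam⟩ := max_le_iff.mp hp
  refine forall_congr' fun i' => ?_
  by_cases hi' : T1 i' <;> by_cases hc' : C i' j <;> simp [aPay, *]

-- With the players exchanged, `bPay` is definitionally `aPay`.
lemma forall_bPay_le_iff (hj : ¬ T2 j) (hc : ¬ C i j) (hp : max κ lam ≤ p2 j) :
    (∀ j', bPay κ lam T2 C p2 i j' ≤ bPay κ lam T2 C p2 i j) ↔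
      ∀ j', ¬ T2 j' → ¬ C i j' → p2 j' ≤ p2 j :=
  forall_aPay_le_iff (C := flip C) hj hc hp

namespace Feasible

lemma nashEq_iff (h : Feasible T1 T2 C i j)
    (hp1 : max κ lam ≤ p1 i) (hp2 : max κ lam ≤ p2 j) :
    NashEq (aPay κ lam T1 C p1) (bPay κ lam T2 C p2) i j ↔
      (∀ i', Feasible T1 T2 C i' j → p1 i' ≤ p1 i) ∧
        ∀ j', Feasible T1 T2 C i j' → p2 j' ≤ p2 j := by
  obtain ⟨hi, hj, hc⟩ := h
  simp only [NashEq, forall_aPay_le_iff hi hc hp1, forall_bPay_le_iff hj hc hp2, Feasible,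
    hi, hj, not_false_eq_true, true_and, and_imp]

lemma nashEq_of_maximalFor
    (h : MaximalFor (fun q : Γ1 × Γ2 => Feasible T1 T2 C q.1 q.2)
      (fun q => (p1 q.1, p2 q.2)) (i, j))
    (hp1 : max κ lam ≤ p1 i) (hp2 : max κ lam ≤ p2 j) :
    NashEq (aPay κ lam T1 C p1) (bPay κ lam T2 C p2) i j := by
  refine (nashEq_iff h.prop hp1 hp2).mpr ⟨fun i' hi' => ?_, fun j' hj' => ?_⟩
  · by_contra! hlt
    exact hlt.not_ge (h.le_of_le (j := (i', j)) hi' ⟨hlt.le, le_rfl⟩).1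
  · by_contra! hlt
    exact hlt.not_ge (h.le_of_le (j := (i, j')) hj' ⟨le_rfl, hlt.le⟩).2

end Feasible

theorem stmt5_general (hp1 : ∀ i, max κ lam ≤ p1 i) (hp2 : ∀ j, max κ lam ≤ p2 j)
    (hfin : ((fun q : Γ1 × Γ2 => (p1 q.1, p2 q.2)) ''
      {q | Feasible T1 T2 C q.1 q.2}).Finite)
    (hA : AssumptionA T1 T2 C) :
    ∃ (iStar : Γ1) (jStar : Γ2),
      NashEq (aPay κ lam T1 C p1) (bPay κ lam T2 C p2) iStar jStar ∧
      Feasible T1 T2 C iStar jStar := by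
  obtain ⟨i₀, j₀, h₀⟩ := hA
  obtain ⟨⟨i, j⟩, hmax⟩ := hfin.exists_maximalFor' _ _ ⟨(i₀, j₀), h₀⟩
  exact ⟨i, j, Feasible.nashEq_of_maximalFor hmax (hp1 i) (hp2 j), hmax.prop⟩

end

theorem stmt5 {Γ1 Γ2 : Type*} [Fintype Γ1] [Fintype Γ2] [Nonempty Γ1] [Nonempty Γ2]
    (κ lam : ℝ) (hκlam : κ < lam) (hlam0 : lam < 0)
    (T1 : Γ1 → Prop) (T2 : Γ2 → Prop) (C : Γ1 → Γ2 → Prop)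
    (p1 : Γ1 → ℝ) (p2 : Γ2 → ℝ)
    (hp1 : ∀ i, 0 < p1 i) (hp2 : ∀ j, 0 < p2 j)
    (hA : AssumptionA T1 T2 C) :
    ∃ (iStar : Γ1) (jStar : Γ2),
      NashEq (aPay κ lam T1 C p1) (bPay κ lam T2 C p2) iStar jStar ∧
      Feasible T1 T2 C iStar jStar := by
  have hpen : max κ lam < 0 := max_lt (hκlam.trans hlam0) hlam0
  exact stmt5_general (fun i => (hpen.trans (hp1 i)).le) (fun j => (hpen.trans (hp2 j)).le)
    (Set.toFinite _) hA

end
end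

section
/- Under Assumption 2.a, every pure-strategy Nash equilibrium (i,j) of the cooperative game that is not feasible satisfies ¬T1 i, ¬T2 j and C i j; consequently both players receive payoff λ, i.e., a(i,j) = b(i,j) = λ. -/
open scoped Classical

noncomputable section

/-!
Exchanging the players turns the leader's cooperative payoff into the follower's, so one argument
covers both. A best response never leaves the track: any on-track trajectory whose progress payoff
exceeds `κ` earns more than `κ`, collision or not, because `κ < λ`. An equilibrium can therefore be
infeasible only through a collision.
-/

section

variable {Γ1 Γ2 : Type*} {κ lam : ℝ}

section FollowerPayoff

variable {T2 : Γ2 → Prop} {C : Γ1 → Γ2 → Prop} {p2 : Γ2 → ℝ} {i : Γ1} {j : Γ2}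

theorem bPay_of_offTrack (hj : T2 j) : bPay κ lam T2 C p2 i j = κ :=
  if_pos hj

theorem bPay_of_collision (hj : ¬ T2 j) (hC : C i j) : bPay κ lam T2 C p2 i j = lam :=
  (if_neg hj).trans (if_pos hC)

theorem lt_bPay_of_onTrack (hκlam : κ < lam) (hj : ¬ T2 j) (hp : κ < p2 j) :
    κ < bPay κ lam T2 C p2 i j := by
  rw [bPay, if_neg hj]
  split_ifs
  exacts [hκlam, hp]

theorem onTrack_of_mem_bestResponse (hκlam : κ < lam) (hsafe : ∃ j', ¬ T2 j' ∧ κ < p2 j')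
    (hj : j ∈ BestResponse (bPay κ lam T2 C p2) i) : ¬ T2 j := by
  intro hT
  obtain ⟨j', hj', hp⟩ := hsafe
  have hdev : κ < bPay κ lam T2 C p2 i j' := lt_bPay_of_onTrack hκlam hj' hp
  have hbest : bPay κ lam T2 C p2 i j' ≤ κ := (hj j').trans_eq (bPay_of_offTrack hT)
  exact hdev.not_ge hbest

end FollowerPayoff

theorem flip_aPay {T1 : Γ1 → Prop} {C : Γ1 → Γ2 → Prop} {p1 : Γ1 → ℝ} :
    flip (aPay κ lam T1 C p1) = bPay κ lam T1 (flip C) p1 :=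
  rfl

theorem nashEq_iff_mem_bestResponse {A B : Γ1 → Γ2 → ℝ} {i : Γ1} {j : Γ2} :
    NashEq A B i j ↔ i ∈ BestResponse (flip A) j ∧ j ∈ BestResponse B i :=
  Iff.rfl

theorem stmt6_general (hκlam : κ < lam)
    {T1 : Γ1 → Prop} {T2 : Γ2 → Prop} {C : Γ1 → Γ2 → Prop} {p1 : Γ1 → ℝ} {p2 : Γ2 → ℝ}
    (hsafe1 : ∃ i, ¬ T1 i ∧ κ < p1 i) (hsafe2 : ∃ j, ¬ T2 j ∧ κ < p2 j) {i : Γ1} {j : Γ2}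
    (hnash : NashEq (aPay κ lam T1 C p1) (bPay κ lam T2 C p2) i j)
    (hinfeas : ¬ Feasible T1 T2 C i j) :
    ¬ T1 i ∧ ¬ T2 j ∧ C i j ∧
      aPay κ lam T1 C p1 i j = lam ∧ bPay κ lam T2 C p2 i j = lam := by
  rw [nashEq_iff_mem_bestResponse, flip_aPay] at hnash
  have hi : ¬ T1 i := onTrack_of_mem_bestResponse hκlam hsafe1 hnash.1
  have hj : ¬ T2 j := onTrack_of_mem_bestResponse hκlam hsafe2 hnash.2
  have hC : C i j := by_contra fun hC ↦ hinfeas ⟨hi, hj, hC⟩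
  have ha : flip (aPay κ lam T1 C p1) j i = lam := by
    rw [flip_aPay]
    exact bPay_of_collision hi hC
  exact ⟨hi, hj, hC, ha, bPay_of_collision hj hC⟩

end

theorem stmt6 {Γ1 Γ2 : Type*} [Fintype Γ1] [Fintype Γ2] [Nonempty Γ1] [Nonempty Γ2]
    (κ lam : ℝ) (hκlam : κ < lam) (hlam0 : lam < 0)
    (T1 : Γ1 → Prop) (T2 : Γ2 → Prop) (C : Γ1 → Γ2 → Prop)
    (p1 : Γ1 → ℝ) (p2 : Γ2 → ℝ)
    (hp1 : ∀ i, 0 < p1 i) (hp2 : ∀ j, 0 < p2 j)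
    (hA : AssumptionA T1 T2 C)
    (i : Γ1) (j : Γ2)
    (hnash : NashEq (aPay κ lam T1 C p1) (bPay κ lam T2 C p2) i j)
    (hinfeas : ¬ Feasible T1 T2 C i j) :
    ¬ T1 i ∧ ¬ T2 j ∧ C i j ∧
      aPay κ lam T1 C p1 i j = lam ∧ bPay κ lam T2 C p2 i j = lam := by
  obtain ⟨i₀, j₀, hi₀, hj₀, -⟩ := hA
  exact stmt6_general hκlam ⟨i₀, hi₀, (hκlam.trans hlam0).trans (hp1 i₀)⟩
    ⟨j₀, hj₀, (hκlam.trans hlam0).trans (hp2 j₀)⟩ hnash hinfeas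

end
end

section
/- Under Assumption 2.b, a pair (i,j) is a sequential maximization pair if and only if it is a Stackelberg equilibrium of the cooperative game; in particular the set of Stackelberg equilibria of the cooperative game equals the set of sequential maximization pairs and is nonempty. -/
open scoped Classical

noncomputable section

/-! A trajectory's guaranteed cooperative payoff never exceeds its sequential payoff, because a
collision only costs the leader. Against a sequential maximizer the follower can earn more than the
collision penalty, so none of his best responses collides, and there the two payoffs agree. A
function lying below another one and touching it at each of its maximizers has the same
maximizers. -/

theorem forall_le_iff_of_le_of_ge_at_max {α β : Type*} [Preorder β] {f g : α → β}
    (hle : ∀ x, g x ≤ f x) (htouch : ∀ x, (∀ y, f y ≤ f x) → f x ≤ g x)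
    (hmax : ∃ x, ∀ y, f y ≤ f x) (x : α) : (∀ y, g y ≤ g x) ↔ ∀ y, f y ≤ f x := by
  refine ⟨fun hg y => ?_, fun hf y => (hle y).trans ((hf y).trans (htouch x hf))⟩
  obtain ⟨x₀, hx₀⟩ := hmax
  calc f y ≤ f x₀ := hx₀ y
    _ ≤ g x₀ := htouch x₀ hx₀
    _ ≤ g x := hg x₀
    _ ≤ f x := hle x

section GuaranteedPayoff

variable {Γ1 Γ2 : Type*} {A B : Γ1 → Γ2 → ℝ} {i : Γ1} {j : Γ2} {c : ℝ}

/-- The payoff that the leader secures by committing to `i`: the worst case over the follower's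
best responses, which a Stackelberg leader maximizes. As an infimum of reals it is `0` if there is
no best response or if the payoffs are unbounded below. -/
def guaranteedPayoff (A B : Γ1 → Γ2 → ℝ) (i : Γ1) : ℝ :=
  sInf (A i '' BestResponse B i)

theorem guaranteedPayoff_le (hA : BddBelow (Set.range (A i))) (hj : j ∈ BestResponse B i) :
    guaranteedPayoff A B i ≤ A i j :=
  csInf_le (hA.mono (Set.image_subset_range _ _)) (Set.mem_image_of_mem _ hj)

theorem le_guaranteedPayoff (hB : (BestResponse B i).Nonempty)
    (hc : ∀ j ∈ BestResponse B i, c ≤ A i j) : c ≤ guaranteedPayoff A B i :=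
  le_csInf (hB.image _) (Set.forall_mem_image.2 hc)

theorem stackelbergEq_iff_of_guaranteedPayoff_le {f : Γ1 → ℝ}
    (hle : ∀ i, guaranteedPayoff A B i ≤ f i)
    (htouch : ∀ i, (∀ i', f i' ≤ f i) → f i ≤ guaranteedPayoff A B i)
    (hmax : ∃ i, ∀ i', f i' ≤ f i) :
    StackelbergEq A B i j ↔ (∀ i', f i' ≤ f i) ∧ j ∈ BestResponse B i :=
  and_congr_left' (forall_le_iff_of_le_of_ge_at_max hle htouch hmax i)

end GuaranteedPayoff

section RacingPayoffs

variable {Γ1 Γ2 : Type*} {κ lam : ℝ} {T1 : Γ1 → Prop} {T2 : Γ2 → Prop} {C : Γ1 → Γ2 → Prop}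
  {p1 : Γ1 → ℝ} {p2 : Γ2 → ℝ} {B : Γ1 → Γ2 → ℝ} {i : Γ1} {j : Γ2}

theorem bddBelow_range_aPay : BddBelow (Set.range (aPay κ lam T1 C p1 i)) := by
  refine (Set.toFinite {κ, lam, p1 i}).bddBelow.mono (Set.range_subset_iff.2 fun j => ?_)
  unfold aPay
  split_ifs <;> simp

theorem aPay_le_aSeq (hlam : lam ≤ p1 i) : aPay κ lam T1 C p1 i j ≤ aSeq κ T1 p1 i := by
  unfold aPay aSeq
  split_ifs
  exacts [le_rfl, hlam, le_rfl]

theorem aPay_eq_aSeq_of_not_collision (hC : ¬ C i j) :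
    aPay κ lam T1 C p1 i j = aSeq κ T1 p1 i := by
  simp [aPay, aSeq, hC]

theorem bPay_le_of_collision (hκlam : κ ≤ lam) (hC : C i j) :
    bPay κ lam T2 C p2 i j ≤ lam := by
  rw [bPay, if_pos hC]
  split_ifs
  exacts [hκlam, le_rfl]

theorem not_collision_of_mem_bestResponse (hκlam : κ ≤ lam)
    (hlt : ∃ j', lam < bPay κ lam T2 C p2 i j')
    (hj : j ∈ BestResponse (bPay κ lam T2 C p2) i) : ¬ C i j := by
  obtain ⟨j', hj'⟩ := hlt
  exact fun hC => (hj'.trans_le (hj j')).not_ge (bPay_le_of_collision hκlam hC)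

theorem guaranteedPayoff_aPay_le_aSeq (hlam : lam ≤ p1 i) (hB : (BestResponse B i).Nonempty) :
    guaranteedPayoff (aPay κ lam T1 C p1) B i ≤ aSeq κ T1 p1 i := by
  obtain ⟨j, hj⟩ := hB
  exact (guaranteedPayoff_le bddBelow_range_aPay hj).trans (aPay_le_aSeq hlam)

theorem aSeq_le_guaranteedPayoff_aPay (hB : (BestResponse B i).Nonempty)
    (hC : ∀ j ∈ BestResponse B i, ¬ C i j) :
    aSeq κ T1 p1 i ≤ guaranteedPayoff (aPay κ lam T1 C p1) B i :=
  le_guaranteedPayoff hB fun j hj => (aPay_eq_aSeq_of_not_collision (hC j hj)).ge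

theorem seqMaxPair_iff_stackelbergEq (hκlam : κ ≤ lam) (hlam : ∀ i, lam ≤ p1 i)
    (hmax : ∃ i, ∀ i', aSeq κ T1 p1 i' ≤ aSeq κ T1 p1 i)
    (hbest : ∀ i, (BestResponse (bPay κ lam T2 C p2) i).Nonempty)
    (hlt : ∀ i, (∀ i', aSeq κ T1 p1 i' ≤ aSeq κ T1 p1 i) →
      ∃ j, lam < bPay κ lam T2 C p2 i j) (i : Γ1) (j : Γ2) :
    SeqMaxPair κ lam T1 T2 C p1 p2 i j ↔
      StackelbergEq (aPay κ lam T1 C p1) (bPay κ lam T2 C p2) i j :=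
  (stackelbergEq_iff_of_guaranteedPayoff_le
    (fun i => guaranteedPayoff_aPay_le_aSeq (hlam i) (hbest i))
    (fun i hi => aSeq_le_guaranteedPayoff_aPay (hbest i) fun _ =>
      not_collision_of_mem_bestResponse hκlam (hlt i hi))
    hmax).symm

end RacingPayoffs

theorem stmt8_general {Γ1 Γ2 : Type*} {κ lam : ℝ} {T1 : Γ1 → Prop} {T2 : Γ2 → Prop}
    {C : Γ1 → Γ2 → Prop} {p1 : Γ1 → ℝ} {p2 : Γ2 → ℝ}
    (hκlam : κ ≤ lam) (hlam : ∀ i, lam ≤ p1 i)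
    (hmax : ∃ i, ∀ i', aSeq κ T1 p1 i' ≤ aSeq κ T1 p1 i)
    (hbest : ∀ i, (BestResponse (bPay κ lam T2 C p2) i).Nonempty)
    (hlt : ∀ i, (∀ i', aSeq κ T1 p1 i' ≤ aSeq κ T1 p1 i) →
      ∃ j, lam < bPay κ lam T2 C p2 i j) :
    (∀ (i : Γ1) (j : Γ2), SeqMaxPair κ lam T1 T2 C p1 p2 i j ↔
      StackelbergEq (aPay κ lam T1 C p1) (bPay κ lam T2 C p2) i j) ∧
    ∃ (i : Γ1) (j : Γ2), StackelbergEq (aPay κ lam T1 C p1) (bPay κ lam T2 C p2) i j := by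
  have hiff := seqMaxPair_iff_stackelbergEq hκlam hlam hmax hbest hlt
  obtain ⟨i, hi⟩ := hmax
  obtain ⟨j, hj⟩ := hbest i
  exact ⟨hiff, i, j, (hiff i j).1 ⟨hi, hj⟩⟩

theorem stmt8 {Γ1 Γ2 : Type*} [Fintype Γ1] [Fintype Γ2] [Nonempty Γ1] [Nonempty Γ2]
    (κ lam : ℝ) (hκlam : κ < lam) (hlam0 : lam < 0)
    (T1 : Γ1 → Prop) (T2 : Γ2 → Prop) (C : Γ1 → Γ2 → Prop)
    (p1 : Γ1 → ℝ) (p2 : Γ2 → ℝ)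
    (hp1 : ∀ i, 0 < p1 i) (hp2 : ∀ j, 0 < p2 j)
    (hB : AssumptionB κ lam T1 T2 C p1 p2) :
    (∀ (i : Γ1) (j : Γ2), SeqMaxPair κ lam T1 T2 C p1 p2 i j ↔
      StackelbergEq (aPay κ lam T1 C p1) (bPay κ lam T2 C p2) i j) ∧
    ∃ (i : Γ1) (j : Γ2), StackelbergEq (aPay κ lam T1 C p1) (bPay κ lam T2 C p2) i j := by
  obtain ⟨-, j, hj⟩ := hB
  exact stmt8_general hκlam.le (fun i => (hlam0.trans (hp1 i)).le) (Finite.exists_max _)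
    (fun i => Finite.exists_max (bPay κ lam T2 C p2 i)) fun i hi => ⟨j, hj i hi⟩

end
end

section
/- Let w ≥ 0. If a blocking pair (i_b, j_b) is a pure-strategy Nash equilibrium of the cooperative game, then (i_b, j_b) is a pure-strategy Nash equilibrium of the blocking game. -/
open scoped Classical

noncomputable section

/-!
In the blocking game the leader's payoff exceeds the cooperative one by at most `w`, and by exactly
`w` at a feasible pair where he is not behind, so none of his deviations becomes more attractive.
The follower's equilibrium condition bounds the progress of each of her feasible replies by her
current progress, hence by the leader's: no reply earns her the bonus `w`, and none of her payoffs
against his trajectory changes.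
-/

section

variable {Γ1 Γ2 : Type*} {κ lam w : ℝ} {T1 : Γ1 → Prop} {T2 : Γ2 → Prop} {C : Γ1 → Γ2 → Prop}
  {p1 : Γ1 → ℝ} {p2 : Γ2 → ℝ} {i : Γ1} {j : Γ2}

theorem NashEq.of_sub_le_sub {A A' B B' : Γ1 → Γ2 → ℝ} (h : NashEq A B i j)
    (hA : ∀ i', A' i' j - A' i j ≤ A i' j - A i j)
    (hB : ∀ j', B' i j' - B' i j ≤ B i j' - B i j) : NashEq A' B' i j :=
  ⟨fun i' => sub_nonpos.1 ((hA i').trans (sub_nonpos.2 (h.1 i'))),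
    fun j' => sub_nonpos.1 ((hB j').trans (sub_nonpos.2 (h.2 j')))⟩

theorem aBl_le_aPay_add (hw : 0 ≤ w) :
    aBl κ lam w T1 C p1 p2 i j ≤ aPay κ lam T1 C p1 i j + w := by
  unfold aBl aPay
  split_ifs <;> linarith

theorem aBl_eq_aPay_add (hT : ¬ T1 i) (hC : ¬ C i j) (hle : p2 j ≤ p1 i) :
    aBl κ lam w T1 C p1 p2 i j = aPay κ lam T1 C p1 i j + w := by
  simp only [aBl, aPay, if_neg hT, if_neg hC, if_neg hle.not_gt]

theorem aBl_sub_le_aPay_sub (hw : 0 ≤ w) (hT : ¬ T1 i) (hC : ¬ C i j) (hle : p2 j ≤ p1 i)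
    (i' : Γ1) :
    aBl κ lam w T1 C p1 p2 i' j - aBl κ lam w T1 C p1 p2 i j ≤
      aPay κ lam T1 C p1 i' j - aPay κ lam T1 C p1 i j :=
  calc
    _ ≤ (aPay κ lam T1 C p1 i' j + w) - (aPay κ lam T1 C p1 i j + w) :=
      sub_le_sub (aBl_le_aPay_add hw) (aBl_eq_aPay_add hT hC hle).ge
    _ = _ := add_sub_add_right_eq_sub _ _ _

theorem bBl_eq_bPay (h : ¬ T2 j → ¬ C i j → p2 j ≤ p1 i) :
    bBl κ lam w T2 C p1 p2 i j = bPay κ lam T2 C p2 i j := by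
  unfold bBl bPay
  split_ifs with hT hC hle
  any_goals rfl
  exact absurd (h hT hC) hle

theorem NashEq.follower_progress_le {A : Γ1 → Γ2 → ℝ} {j' : Γ2}
    (h : NashEq A (bPay κ lam T2 C p2) i j) (hT : ¬ T2 j) (hC : ¬ C i j)
    (hT' : ¬ T2 j') (hC' : ¬ C i j') : p2 j' ≤ p2 j := by
  simpa only [bPay, if_neg hT, if_neg hC, if_neg hT', if_neg hC'] using h.2 j'

theorem stmt15_general (hw : 0 ≤ w) (hfeas : Feasible T1 T2 C i j) (hle : p2 j ≤ p1 i)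
    (hnash : NashEq (aPay κ lam T1 C p1) (bPay κ lam T2 C p2) i j) :
    NashEq (aBl κ lam w T1 C p1 p2) (bBl κ lam w T2 C p1 p2) i j := by
  obtain ⟨hT1, hT2, hC⟩ := hfeas
  have follower_payoff (j' : Γ2) :
      bBl κ lam w T2 C p1 p2 i j' = bPay κ lam T2 C p2 i j' :=
    bBl_eq_bPay fun hT' hC' => (hnash.follower_progress_le hT2 hC hT' hC').trans hle
  refine hnash.of_sub_le_sub (aBl_sub_le_aPay_sub hw hT1 hC hle) fun j' => ?_
  rw [follower_payoff j', follower_payoff j]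

end

theorem stmt15 {Γ1 Γ2 : Type*} [Fintype Γ1] [Fintype Γ2] [Nonempty Γ1] [Nonempty Γ2]
    (κ lam : ℝ) (hκlam : κ < lam) (hlam0 : lam < 0)
    (T1 : Γ1 → Prop) (T2 : Γ2 → Prop) (C : Γ1 → Γ2 → Prop)
    (p1 : Γ1 → ℝ) (p2 : Γ2 → ℝ)
    (hp1 : ∀ i, 0 < p1 i) (hp2 : ∀ j, 0 < p2 j)
    (w : ℝ) (hw : 0 ≤ w)
    (ib : Γ1) (jb : Γ2)
    (hbl : BlockingPair T1 T2 C p1 p2 ib jb)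
    (hnash : NashEq (aPay κ lam T1 C p1) (bPay κ lam T2 C p2) ib jb) :
    NashEq (aBl κ lam w T1 C p1 p2) (bBl κ lam w T2 C p1 p2) ib jb :=
  stmt15_general hw hbl.1 hbl.2.1.le hnash

end
end

section
/- Exact soft-constraint reformulation: let S : Γ1 × Γ2 → ℝ be slack multipliers with S(i,j) > 0 whenever C i j. Then there exists σ > 0 such that for every pair (i,j) with C i j, both p1 i − σ·S(i,j) < λ and p2 j − σ·S(i,j) < λ; hence with penalty weight σ neither player can benefit from violating the collision constraints relative to the hard-constrained payoff λ. -/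
open scoped Classical

noncomputable section

/-- The critical penalty weight of a colliding pair whose players have progress payoffs `a` and `b`
and whose slack multiplier is `s`: for `0 < s`, the weights above it are those that push both
penalized payoffs strictly below `lam`. -/
def criticalWeight {K : Type*} [Field K] [LinearOrder K] (lam a b s : K) : K :=
  (max a b - lam) / s

theorem criticalWeight_lt_iff {K : Type*} [Field K] [LinearOrder K] [IsStrictOrderedRing K]
    {lam a b s σ : K} (hs : 0 < s) :
    criticalWeight lam a b s < σ ↔ a - σ * s < lam ∧ b - σ * s < lam := by
  rw [criticalWeight, div_lt_iff₀ hs, sub_lt_comm, ← max_sub_sub_right, max_lt_iff]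

theorem exists_gt_and_forall_mem_lt_iff_bddAbove {α : Type*} [Preorder α] [IsDirectedOrder α]
    [NoMaxOrder α] {A : Set α} (a : α) : (∃ b, a < b ∧ ∀ x ∈ A, x < b) ↔ BddAbove A := by
  refine ⟨fun ⟨b, _, hb⟩ ↦ ⟨b, fun x hx ↦ (hb x hx).le⟩, fun hA ↦ ?_⟩
  obtain ⟨m, hm⟩ := hA.insert a
  obtain ⟨b, hmb⟩ := exists_gt m
  exact ⟨b, (hm (.inl rfl)).trans_lt hmb, fun x hx ↦ (hm (.inr hx)).trans_lt hmb⟩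

theorem stmt17_general {Γ1 Γ2 K : Type*} [Field K] [LinearOrder K] [IsStrictOrderedRing K]
    (lam : K) (C : Γ1 → Γ2 → Prop) (p1 : Γ1 → K) (p2 : Γ2 → K) (S : Γ1 → Γ2 → K)
    (hS : ∀ i j, C i j → 0 < S i j) :
    (∃ σ : K, 0 < σ ∧ ∀ i j, C i j → p1 i - σ * S i j < lam ∧ p2 j - σ * S i j < lam) ↔
      BddAbove ((fun x : Γ1 × Γ2 ↦ criticalWeight lam (p1 x.1) (p2 x.2) (S x.1 x.2)) ''
        {x | C x.1 x.2}) := by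
  rw [← exists_gt_and_forall_mem_lt_iff_bddAbove 0]
  simp only [Set.forall_mem_image, Prod.forall, Set.mem_ofPred_eq]
  refine exists_congr fun σ ↦ and_congr_right fun _ ↦ ?_
  exact forall₃_congr fun i j hC ↦ (criticalWeight_lt_iff (hS i j hC)).symm

theorem stmt17 {Γ1 Γ2 : Type*} [Fintype Γ1] [Fintype Γ2] [Nonempty Γ1] [Nonempty Γ2]
    (κ lam : ℝ) (hκlam : κ < lam) (hlam0 : lam < 0)
    (C : Γ1 → Γ2 → Prop)
    (p1 : Γ1 → ℝ) (p2 : Γ2 → ℝ)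
    (hp1 : ∀ i, 0 < p1 i) (hp2 : ∀ j, 0 < p2 j)
    (S : Γ1 → Γ2 → ℝ)
    (hS : ∀ i j, C i j → 0 < S i j) :
    ∃ σ : ℝ, 0 < σ ∧ ∀ i j, C i j →
      p1 i - σ * S i j < lam ∧ p2 j - σ * S i j < lam :=
  (stmt17_general lam C p1 p2 S hS).2 (Set.toFinite _).bddAbove

end
end
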